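/- Under the setting of the Cox construction with one jump and random jump size — namely: (Ω, 𝓕, 𝔽, P) satisfying the usual conditions; λ a nonnegative 𝔽-progressively measurable process with Λ_t := ∫_0^t λ_s ds finite for all t and Λ_∞ = ∞ a.s.; E ~ Exp(1) independent of 𝓕_∞; τ := inf{t > 0 : Λ_t ≥ E}; J an integrable random variable with P(J ≠ 0) = 1 independent of 𝓕_∞ ∨ σ(E); and 𝔾̃ the right-continuous regularization of (𝓕_t ∨ σ(J·1_{{τ ≤ s}} : s ≤ t))_{t≥0} — the following holds: for any measurable function h : ℝ → ℝ such that h(J) is integrable, the process (h(J)·1_{{τ ≤ t}} − E[h(J)]·Λ_{τ∧t})_{t≥0} is a 𝔾̃-martingale. -/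

import Mathlib

/-!
Almost surely `{τ ≤ t} = {E ≤ Λ_t}` and `Λ_{τ ∧ t} = min E Λ_t`. As `P(E ≤ z) = 𝔼[min E z]` for
every constant `z ≥ 0`, freezing the `F_∞`-measurable variable `Λ_t` and using that `J` is
independent of everything else shows that the compensated jump process has integral `0` over every
event of `F_∞`.

On `{s < τ}` the process `J 1_{τ ≤ ·}` vanishes up to time `s`, so every event of the enlarged
σ-algebra at time `s` coincides there with an event of `F_s`; off `{s < τ}` the compensated process
is constant after time `s`. Its increments therefore have integral `0` over the events of the
enlarged σ-algebra, which makes it a martingale. It is adapted because `J ≠ 0` makes `{τ ≤ s}`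
observable. By right-continuity of the paths and uniform integrability, it remains a martingale for
the right-continuous regularization.
-/

open MeasureTheory ProbabilityTheory Filter Set
open scoped ENNReal Topology

noncomputable section

namespace InvMarkovJump

variable {Ω : Type*}

/-- `F` is a filtration (for times `t ≥ 0`) of sub-σ-algebras of `m0`. -/
def IsFiltration (m0 : MeasurableSpace Ω) (F : ℝ → MeasurableSpace Ω) : Prop :=
  (∀ s t : ℝ, 0 ≤ s → s ≤ t → F s ≤ F t) ∧ ∀ t : ℝ, F t ≤ m0

/-- The right-continuous regularization `(⋂_{s > t} F s)_{t ≥ 0}` of a filtration. -/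
def rcReg (F : ℝ → MeasurableSpace Ω) : ℝ → MeasurableSpace Ω :=
  fun t => ⨅ s ∈ Set.Ioi t, F s

/-- All sample paths of `M` are right-continuous (at every time `t ≥ 0`). -/
def RCPaths (M : ℝ → Ω → ℝ) : Prop :=
  ∀ ω, ∀ t : ℝ, 0 ≤ t → ContinuousWithinAt (fun s => M s ω) (Set.Ici t) t

/-- `M` is a martingale (for times `t ≥ 0`) with respect to the filtration `F`
under the measure `μ`: it is adapted, integrable, and `E[M_t | F_s] = M_s` a.s.
for all `0 ≤ s ≤ t`. -/
def IsMartingale {m0 : MeasurableSpace Ω} (μ : Measure Ω)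
    (F : ℝ → MeasurableSpace Ω) (M : ℝ → Ω → ℝ) : Prop :=
  (∀ t : ℝ, 0 ≤ t → Integrable (M t) μ) ∧
  (∀ t : ℝ, 0 ≤ t → Measurable[F t] (M t)) ∧
  ∀ s t : ℝ, 0 ≤ s → s ≤ t → μ[M t|F s] =ᵐ[μ] M s

/-- `F` is immersed in `G`: `F ⊆ G` and every `F`-martingale (with right-continuous
sample paths) is a `G`-martingale. -/
def Immersed {m0 : MeasurableSpace Ω} (μ : Measure Ω)
    (F G : ℝ → MeasurableSpace Ω) : Prop :=
  (∀ t : ℝ, 0 ≤ t → F t ≤ G t) ∧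
  ∀ M : ℝ → Ω → ℝ, RCPaths M → IsMartingale μ F M → IsMartingale μ G M

/-- The usual conditions: the filtration is right-continuous and `F 0` contains
all `μ`-null sets. -/
def UsualConditions {m0 : MeasurableSpace Ω} (μ : Measure Ω)
    (F : ℝ → MeasurableSpace Ω) : Prop :=
  IsFiltration m0 F ∧ (∀ t : ℝ, 0 ≤ t → F t = rcReg F t) ∧
    ∀ s : Set Ω, μ s = 0 → MeasurableSet[F 0] s

/-- `E` is `Exp(1)`-distributed: `P(E > x) = e^{-x}` for all `x ≥ 0`. -/
def IsExpOne {m0 : MeasurableSpace Ω} (μ : Measure Ω) (E : Ω → ℝ) : Prop :=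
  Measurable E ∧ ∀ x : ℝ, 0 ≤ x → μ {ω | x < E ω} = ENNReal.ofReal (Real.exp (-x))

/-- `F_∞ = ⋁_{t ≥ 0} F t`. -/
def Finfty (F : ℝ → MeasurableSpace Ω) : MeasurableSpace Ω :=
  ⨆ t ∈ Set.Ici (0:ℝ), F t

/-- The natural filtration `(σ(Y_s : 0 ≤ s ≤ t))_{t ≥ 0}` of a process `Y`. -/
def natFilt {β : Type*} [MeasurableSpace β] (Y : ℝ → Ω → β) : ℝ → MeasurableSpace Ω :=
  fun t => ⨆ s ∈ Set.Icc (0:ℝ) t, MeasurableSpace.comap (Y s) inferInstance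

/-- Progressive measurability of a process `u` with respect to the filtration `F`:
for every `t ≥ 0`, `(s, ω) ↦ u s ω` on `[0, t] × Ω` is `B([0,t]) ⊗ F t`-measurable. -/
def ProgMeas (F : ℝ → MeasurableSpace Ω) (u : ℝ → Ω → ℝ) : Prop :=
  ∀ t : ℝ, 0 ≤ t →
    Measurable[MeasurableSpace.prod inferInstance (F t)]
      (fun p : Set.Icc (0:ℝ) t × Ω => u p.1 p.2)

section Sets

variable {m m0 : MeasurableSpace Ω} {μ : Measure Ω}

lemma measurableSet_of_ae_eq (hm : ∀ s, μ s = 0 → MeasurableSet[m] s) {A B : Set Ω}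
    (hA : MeasurableSet[m] A) (hAB : A =ᵐ[μ] B) : MeasurableSet[m] B := by
  have hB := MeasurableSet.symmDiff hA (hm _ (measure_symmDiff_eq_zero_iff.2 hAB))
  rwa [symmDiff_symmDiff_cancel_left] at hB

lemma setIntegral_eq_of_inter_eq {V : Type*} [NormedAddCommGroup V] [NormedSpace ℝ V] {f : Ω → V}
    {A B S : Set Ω} (hA : MeasurableSet A) (hB : MeasurableSet B) (hAB : A ∩ S = B ∩ S)
    (hf : ∀ ω ∉ S, f ω = 0) : ∫ ω in A, f ω ∂μ = ∫ ω in B, f ω ∂μ := by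
  have hS : S.indicator f = f := indicator_eq_self.2 (Function.support_subset_iff'.2 hf)
  rw [← integral_indicator hA, ← integral_indicator hB, ← hS, indicator_indicator,
    indicator_indicator, hAB]

end Sets

/-- The first time `t > 0` at which the path `L` is at least `e`; it is `0` if there is none. -/
def firstPassage (L : ℝ → ℝ) (e : ℝ) : ℝ :=
  sInf {t : ℝ | 0 < t ∧ e ≤ L t}

/-- A cumulative hazard: a path on `[0, ∞)` that starts at `0` and increases continuously to `∞`.
Its values at negative times are unconstrained. -/
structure IsHazardPath (L : ℝ → ℝ) : Prop where
  zero : L 0 = 0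
  monotoneOn : MonotoneOn L (Ici 0)
  continuousOn : ContinuousOn L (Ici 0)
  tendsto_atTop : Tendsto L atTop atTop

lemma firstPassage_nonneg (L : ℝ → ℝ) (e : ℝ) : 0 ≤ firstPassage L e :=
  Real.sInf_nonneg fun _ ht => ht.1.le

namespace IsHazardPath

variable {L : ℝ → ℝ} {a e t : ℝ}

lemma nonneg (hL : IsHazardPath L) (ht : 0 ≤ t) : 0 ≤ L t :=
  hL.zero ▸ hL.monotoneOn self_mem_Ici ht ht

lemma le_apply_firstPassage (hL : IsHazardPath L) (he : 0 < e) : e ≤ L (firstPassage L e) := by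
  have hset : {t : ℝ | 0 < t ∧ e ≤ L t} = Ici 0 ∩ L ⁻¹' Ici e := by
    ext t
    refine ⟨fun h => ⟨h.1.le, h.2⟩, fun h => ⟨lt_of_le_of_ne h.1 ?_, h.2⟩⟩
    rintro rfl
    exact (he.trans_le h.2).ne' hL.zero
  have hclosed : IsClosed {t : ℝ | 0 < t ∧ e ≤ L t} :=
    hset ▸ hL.continuousOn.preimage_isClosed_of_isClosed isClosed_Ici isClosed_Ici
  have hnonempty : {t : ℝ | 0 < t ∧ e ≤ L t}.Nonempty :=
    ((eventually_gt_atTop 0).and (hL.tendsto_atTop.eventually_ge_atTop e)).exists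
  exact (hclosed.csInf_mem hnonempty ⟨0, fun _ ht => ht.1.le⟩).2

lemma firstPassage_le_iff (hL : IsHazardPath L) (he : 0 < e) (ht : 0 ≤ t) :
    firstPassage L e ≤ t ↔ e ≤ L t := by
  refine ⟨fun h => (hL.le_apply_firstPassage he).trans
    (hL.monotoneOn (firstPassage_nonneg L e) ht h), fun h => ?_⟩
  have ht' : t ≠ 0 := by
    rintro rfl
    exact (he.trans_le h).ne' hL.zero
  exact csInf_le ⟨0, fun _ hs => hs.1.le⟩ ⟨lt_of_le_of_ne ht ht'.symm, h⟩

lemma apply_firstPassage (hL : IsHazardPath L) (he : 0 < e) : L (firstPassage L e) = e := by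
  obtain ⟨x, ⟨hx0, hx⟩, rfl⟩ := intermediate_value_Icc (firstPassage_nonneg L e)
    (hL.continuousOn.mono Icc_subset_Ici_self)
    ⟨hL.zero.trans_le he.le, hL.le_apply_firstPassage he⟩
  exact congrArg L (le_antisymm ((hL.firstPassage_le_iff he hx0).2 le_rfl) hx)

lemma apply_min_firstPassage (hL : IsHazardPath L) (he : 0 < e) (ht : 0 ≤ t) :
    L (min (firstPassage L e) t) = min e (L t) := by
  rw [hL.monotoneOn.map_min (firstPassage_nonneg L e) ht, hL.apply_firstPassage he]

lemma lt_min_iff_exists_lt_firstPassage (hL : IsHazardPath L) (he : 0 < e) (ht : 0 ≤ t) :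
    a < min e (L t) ↔
      ∃ s ∈ Icc 0 t ∩ insert t (range ((↑) : ℚ → ℝ)), s < firstPassage L e ∧ a < L s := by
  constructor
  · intro ha
    rcases lt_or_ge t (firstPassage L e) with hlt | hge
    · exact ⟨t, ⟨right_mem_Icc.2 ht, mem_insert t _⟩, hlt, ha.trans_le (min_le_right _ _)⟩
    -- A level strictly between `a` and `e` is reached strictly before `e` is.
    obtain ⟨b, hb, hbe⟩ := exists_between (max_lt (ha.trans_le (min_le_left _ _)) he)
    have hab : a < b := (le_max_left a 0).trans_lt hb
    have hb0 : 0 < b := (le_max_right a 0).trans_lt hb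
    have hlt : firstPassage L b < firstPassage L e := by
      rwa [← not_le, hL.firstPassage_le_iff he (firstPassage_nonneg L b),
        hL.apply_firstPassage hb0, not_le]
    obtain ⟨q, hbq, hqe⟩ := exists_rat_btwn hlt
    have hq0 : (0 : ℝ) ≤ q := (firstPassage_nonneg L b).trans hbq.le
    exact ⟨q, ⟨⟨hq0, hqe.le.trans hge⟩, Or.inr ⟨q, rfl⟩⟩, hqe,
      hab.trans_le ((hL.firstPassage_le_iff hb0 hq0).1 hbq.le)⟩
  · rintro ⟨s, ⟨⟨hs0, hst⟩, -⟩, hs, has⟩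
    rw [← not_le, hL.firstPassage_le_iff he hs0, not_le] at hs
    exact lt_min (has.trans hs) (has.trans_le (hL.monotoneOn hs0 ht hst))

end IsHazardPath

/-- A hazard process: adapted to `F`, with almost every path a cumulative hazard. -/
structure IsHazardProcess {m0 : MeasurableSpace Ω} (μ : Measure Ω) (F : ℝ → MeasurableSpace Ω)
    (Λ : ℝ → Ω → ℝ) : Prop where
  measurable : ∀ t, 0 ≤ t → Measurable[F t] (Λ t)
  ae_isHazardPath : ∀ᵐ ω ∂μ, IsHazardPath fun t => Λ t ω

section Intensity

lemma monotone_setIntegral_Ioc {u : ℝ → ℝ} {a : ℝ} (hu : ∀ s, 0 ≤ u s)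
    (hint : ∀ t, IntegrableOn u (Ioc a t)) : Monotone fun t => ∫ s in Ioc a t, u s :=
  fun _ b hab => setIntegral_mono_set (hint b) (Eventually.of_forall hu)
    (Ioc_subset_Ioc_right hab).eventuallyLE

lemma continuousOn_setIntegral_Ioc {V : Type*} [NormedAddCommGroup V] [NormedSpace ℝ V]
    {u : ℝ → V} {a : ℝ} (hint : ∀ t, IntegrableOn u (Ioc a t)) :
    ContinuousOn (fun t => ∫ s in Ioc a t, u s) (Ici a) := by
  intro t ht
  have hcont : ContinuousOn (fun t => ∫ s in Ioc a t, u s) (Icc a (t + 1)) :=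
    intervalIntegral.continuousOn_primitive
      ((integrableOn_Icc_iff_integrableOn_Ioc).2 (hint (t + 1)))
  refine (hcont t ⟨ht, by linarith⟩).mono_of_mem_nhdsWithin ?_
  rw [← Ici_inter_Iic]
  exact inter_mem_nhdsWithin _ (Iic_mem_nhds (lt_add_one t))

lemma ProgMeas.measurable_setIntegral {F : ℝ → MeasurableSpace Ω} {u : ℝ → Ω → ℝ}
    (hu : ProgMeas F u) {t : ℝ} (ht : 0 ≤ t) :
    Measurable[F t] fun ω => ∫ s in Ioc 0 t, u s ω := by
  let _ := F t
  have : IsFiniteMeasure (Measure.comap ((↑) : Icc 0 t → ℝ) volume) :=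
    ⟨by
      rw [(MeasurableEmbedding.subtype_coe measurableSet_Icc).comap_apply, image_univ,
        Subtype.range_coe]
      exact measure_Icc_lt_top⟩
  have hmeas := ((hu t ht).stronglyMeasurable.integral_prod_left'
    (μ := Measure.comap ((↑) : Icc 0 t → ℝ) volume)).measurable
  convert hmeas using 2 with ω
  rw [integral_subtype_comap measurableSet_Icc (fun s => u s ω), integral_Icc_eq_integral_Ioc]

lemma ProgMeas.isHazardProcess_setIntegral {m0 : MeasurableSpace Ω} {μ : Measure Ω}
    {F : ℝ → MeasurableSpace Ω} {lam : ℝ → Ω → ℝ} (hprog : ProgMeas F lam)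
    (hnonneg : ∀ s ω, 0 ≤ lam s ω)
    (hfin : ∀ᵐ ω ∂μ, ∀ t : ℝ, IntegrableOn (fun s => lam s ω) (Ioc 0 t))
    (hinf : ∀ᵐ ω ∂μ, Tendsto (fun t => ∫ s in Ioc 0 t, lam s ω) atTop atTop) :
    IsHazardProcess μ F fun t ω => ∫ s in Ioc 0 t, lam s ω where
  measurable _ ht := hprog.measurable_setIntegral ht
  ae_isHazardPath := by
    filter_upwards [hfin, hinf] with ω hfin hinf
    exact ⟨by simp, (monotone_setIntegral_Ioc (fun s => hnonneg s ω) hfin).monotoneOn _,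
      continuousOn_setIntegral_Ioc hfin, hinf⟩

end Intensity

section Independence

variable {m m₁ m₂ m0 : MeasurableSpace Ω} {μ : Measure Ω}

lemma setIntegral_eq_smul_integral_of_indep {V : Type*} [NormedAddCommGroup V] [NormedSpace ℝ V]
    [CompleteSpace V] [IsFiniteMeasure μ] (hm₁ : m₁ ≤ m0) (hm₂ : m₂ ≤ m0) (hind : Indep m₁ m₂ μ)
    {f : Ω → V} (hf : StronglyMeasurable[m₁] f) (hfint : Integrable f μ) {A : Set Ω}
    (hA : MeasurableSet[m₂] A) : ∫ ω in A, f ω ∂μ = μ.real A • ∫ ω, f ω ∂μ := by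
  rw [← setIntegral_condExp hm₂ hfint hA,
    setIntegral_congr_ae (hm₂ A hA) ((condExp_indep_eq hm₁ hm₂ hf hind).mono fun _ h _ => h),
    setIntegral_const]

lemma map_restrict_prodMk_eq_prod_of_indep {α β : Type*} [MeasurableSpace α] [MeasurableSpace β]
    [IsFiniteMeasure μ] {X : Ω → α} (hX : Measurable X) (hm : m ≤ m0)
    (hind : Indep (MeasurableSpace.comap X inferInstance) m μ) {Z : Ω → β} (hZ : Measurable[m] Z)
    {B : Set Ω} (hB : MeasurableSet[m] B) :
    (μ.restrict B).map (fun ω => (X ω, Z ω)) = (μ.map X).prod ((μ.restrict B).map Z) := by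
  have hZ0 : Measurable Z := hZ.mono hm le_rfl
  refine (Measure.prod_eq fun S T hS hT => ?_).symm
  rw [Measure.map_apply (hX.prodMk hZ0) (hS.prod hT), mk_preimage_prod,
    Measure.restrict_apply ((hX hS).inter (hZ0 hT)), inter_assoc,
    (Indep_iff _ _ μ).1 hind _ _ ⟨S, hS, rfl⟩ ((hZ hT).inter hB),
    Measure.map_apply hX hS, Measure.map_apply hZ0 hT, Measure.restrict_apply (hZ0 hT)]

lemma setLIntegral_comp_prodMk_of_indep {α β : Type*} [MeasurableSpace α] [MeasurableSpace β]
    [IsFiniteMeasure μ] {X : Ω → α} (hX : Measurable X) (hm : m ≤ m0)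
    (hind : Indep (MeasurableSpace.comap X inferInstance) m μ) {Z : Ω → β} (hZ : Measurable[m] Z)
    {B : Set Ω} (hB : MeasurableSet[m] B) {f : α × β → ℝ≥0∞} (hf : Measurable f) :
    ∫⁻ ω in B, f (X ω, Z ω) ∂μ = ∫⁻ ω in B, ∫⁻ ω', f (X ω', Z ω) ∂μ ∂μ := by
  have hZ0 : Measurable Z := hZ.mono hm le_rfl
  rw [← lintegral_map hf (hX.prodMk hZ0), map_restrict_prodMk_eq_prod_of_indep hX hm hind hZ hB,
    lintegral_prod_symm' _ hf, lintegral_map hf.lintegral_prod_left' hZ0]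
  exact lintegral_congr fun ω => lintegral_map (hf.comp measurable_prodMk_right) hX

end Independence

namespace IsExpOne

variable {m m0 : MeasurableSpace Ω} {μ : Measure Ω} [IsProbabilityMeasure μ] {E : Ω → ℝ}

lemma ae_pos (hE : IsExpOne μ E) : ∀ᵐ ω ∂μ, 0 < E ω :=
  (prob_compl_eq_zero_iff (measurableSet_lt measurable_const hE.1)).2 <| by
    simpa using hE.2 0 le_rfl

lemma integrable (hE : IsExpOne μ E) : Integrable E μ := by
  have hnonneg : 0 ≤ᵐ[μ] E := hE.ae_pos.mono fun _ h => h.le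
  refine ⟨hE.1.aestronglyMeasurable, ?_⟩
  rw [hasFiniteIntegral_iff_ofReal hnonneg,
    lintegral_eq_lintegral_meas_lt μ hnonneg hE.1.aemeasurable,
    setLIntegral_congr_fun measurableSet_Ioi fun x hx => hE.2 x (le_of_lt hx)]
  exact (integrableOn_exp_neg_Ioi 0).lintegral_lt_top

lemma measure_le (hE : IsExpOne μ E) {a : ℝ} (ha : 0 ≤ a) :
    μ {ω | E ω ≤ a} = ENNReal.ofReal (1 - Real.exp (-a)) := by
  have hcompl : {ω | E ω ≤ a} = {ω | a < E ω}ᶜ := by ext; simp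
  rw [hcompl, prob_compl_eq_one_sub (measurableSet_lt measurable_const hE.1), hE.2 a ha,
    ENNReal.ofReal_sub _ (Real.exp_pos _).le, ENNReal.ofReal_one]

lemma lintegral_min (hE : IsExpOne μ E) {a : ℝ} (ha : 0 ≤ a) :
    ∫⁻ ω, ENNReal.ofReal (min (E ω) a) ∂μ = ENNReal.ofReal (1 - Real.exp (-a)) := by
  have hnonneg : 0 ≤ᵐ[μ] fun ω => min (E ω) a := hE.ae_pos.mono fun _ h => le_min h.le ha
  have htail : ∀ x ∈ Ioi (0 : ℝ), μ {ω | x < min (E ω) a} =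
      (Iio a).indicator (fun x => ENNReal.ofReal (Real.exp (-x))) x := by
    intro x hx
    by_cases hxa : x < a
    · simpa [hxa] using hE.2 x (le_of_lt hx)
    · simp [hxa]
  rw [lintegral_eq_lintegral_meas_lt μ hnonneg (hE.1.min measurable_const).aemeasurable,
    setLIntegral_congr_fun measurableSet_Ioi htail, setLIntegral_indicator measurableSet_Iio,
    Iio_inter_Ioi, ← ofReal_integral_eq_lintegral_ofReal, ← integral_Ioc_eq_integral_Ioo,
    ← intervalIntegral.integral_of_le ha, intervalIntegral.integral_comp_neg Real.exp, integral_exp,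
    neg_zero, Real.exp_zero]
  · exact (integrableOn_exp_neg_Ioi 0).mono_set Ioo_subset_Ioi_self
  · exact Eventually.of_forall fun x => (Real.exp_pos _).le

variable {Z : Ω → ℝ}

lemma integrable_min (hE : IsExpOne μ E) (hZ : Measurable Z) (hZ0 : 0 ≤ᵐ[μ] Z) :
    Integrable (fun ω => min (E ω) (Z ω)) μ := by
  refine hE.integrable.mono' (hE.1.min hZ).aestronglyMeasurable ?_
  filter_upwards [hE.ae_pos, hZ0] with ω hω hZω
  rw [Real.norm_of_nonneg (le_min hω.le hZω)]
  exact min_le_left _ _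

lemma setIntegral_min_eq_measureReal (hE : IsExpOne μ E) (hm : m ≤ m0)
    (hind : Indep (MeasurableSpace.comap E inferInstance) m μ) (hZ : Measurable[m] Z)
    (hZ0 : 0 ≤ᵐ[μ] Z) {B : Set Ω} (hB : MeasurableSet[m] B) :
    ∫ ω in B, min (E ω) (Z ω) ∂μ = μ.real (B ∩ {ω | E ω ≤ Z ω}) := by
  have hZm0 : Measurable Z := hZ.mono hm le_rfl
  have hEZ : Measurable fun ω => (E ω, Z ω) := hE.1.prodMk hZm0
  have hset : MeasurableSet {p : ℝ × ℝ | p.1 ≤ p.2} :=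
    measurableSet_le measurable_fst measurable_snd
  have hnonneg : ∀ᵐ ω ∂μ, 0 ≤ min (E ω) (Z ω) := by
    filter_upwards [hE.ae_pos, hZ0] with ω hω hZω using le_min hω.le hZω
  have hmeasure : μ (B ∩ {ω | E ω ≤ Z ω}) =
      ∫⁻ ω in B, {p : ℝ × ℝ | p.1 ≤ p.2}.indicator 1 (E ω, Z ω) ∂μ := by
    rw [← lintegral_map (measurable_one.indicator hset) hEZ, lintegral_indicator_one hset,
      Measure.map_apply hEZ hset, Measure.restrict_apply (hEZ hset), inter_comm]
    rfl
  rw [integral_eq_lintegral_of_nonneg_ae (ae_restrict_of_ae hnonneg)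
    (hE.1.min hZm0).aestronglyMeasurable, measureReal_def, hmeasure,
    setLIntegral_comp_prodMk_of_indep hE.1 hm hind hZ hB (measurable_one.indicator hset),
    setLIntegral_comp_prodMk_of_indep (f := fun p => ENNReal.ofReal (min p.1 p.2)) hE.1 hm hind hZ
      hB (by fun_prop)]
  congr 1
  refine lintegral_congr_ae (ae_restrict_of_ae (hZ0.mono fun ω hω => ?_))
  change ∫⁻ ω', ENNReal.ofReal (min (E ω') (Z ω)) ∂μ =
    ∫⁻ ω', {x | E x ≤ Z ω}.indicator 1 ω' ∂μ
  rw [lintegral_indicator_one (measurableSet_le hE.1 measurable_const), hE.lintegral_min hω,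
    hE.measure_le hω]

end IsExpOne

section Martingale

variable {m0 : MeasurableSpace Ω} {μ : Measure Ω} [IsFiniteMeasure μ]
  {G : ℝ → MeasurableSpace Ω} {M : ℝ → Ω → ℝ}

lemma IsMartingale.setIntegral_eq (hG : IsFiltration m0 G) (hM : IsMartingale μ G M) {s t : ℝ}
    (hs : 0 ≤ s) (hst : s ≤ t) {A : Set Ω} (hA : MeasurableSet[G s] A) :
    ∫ ω in A, M s ω ∂μ = ∫ ω in A, M t ω ∂μ := by
  rw [← setIntegral_condExp (hG.2 s) (hM.1 t (hs.trans hst)) hA]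
  exact setIntegral_congr_ae (hG.2 s A hA) ((hM.2.2 s t hs hst).mono fun _ h _ => h.symm)

lemma isMartingale_of_setIntegral_eq (hG : ∀ t, 0 ≤ t → G t ≤ m0)
    (hint : ∀ t, 0 ≤ t → Integrable (M t) μ) (hmeas : ∀ t, 0 ≤ t → Measurable[G t] (M t))
    (heq : ∀ s t, 0 ≤ s → s < t → ∀ A, MeasurableSet[G s] A →
      ∫ ω in A, M s ω ∂μ = ∫ ω in A, M t ω ∂μ) :
    IsMartingale μ G M := by
  refine ⟨hint, hmeas, fun s t hs hst => ?_⟩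
  refine (ae_eq_condExp_of_forall_setIntegral_eq (hG s hs) (hint t (hs.trans hst))
    (fun A _ _ => (hint s hs).integrableOn) (fun A hA _ => ?_)
    (hmeas s hs).stronglyMeasurable.aestronglyMeasurable).symm
  rcases hst.eq_or_lt with rfl | hlt
  · rfl
  · exact heq s t hs hlt A hA

lemma IsMartingale.tendsto_eLpNorm_sub (hG : IsFiltration m0 G) (hM : IsMartingale μ G M)
    {s t : ℝ} (hs : 0 ≤ s) {u : ℕ → ℝ} (hu : ∀ n, u n ∈ Ioo s t)
    (hlim : ∀ᵐ ω ∂μ, Tendsto (fun n => M (u n) ω) atTop (𝓝 (M s ω))) :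
    Tendsto (fun n => eLpNorm (M (u n) - M s) 1 μ) atTop (𝓝 0) := by
  have hu0 : ∀ n, 0 ≤ u n := fun n => hs.trans (hu n).1.le
  have ht : 0 ≤ t := (hu0 0).trans (hu 0).2.le
  have hui : UnifIntegrable (fun n => M (u n)) 1 μ :=
    ((hM.1 t ht).uniformIntegrable_condExp fun n => hG.2 (u n)).unifIntegrable.ae_eq
      fun n => hM.2.2 (u n) t (hu0 n) (hu n).2.le
  exact tendsto_Lp_finite_of_tendsto_ae le_rfl ENNReal.one_ne_top
    (fun n => (hM.1 (u n) (hu0 n)).aestronglyMeasurable) (memLp_one_iff_integrable.2 (hM.1 s hs))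
    hui hlim

lemma le_rcReg (hG : IsFiltration m0 G) {t : ℝ} (ht : 0 ≤ t) : G t ≤ rcReg G t :=
  le_iInf₂ fun s hs => hG.1 t s ht (le_of_lt hs)

lemma rcReg_le_of_lt {s t : ℝ} (hst : s < t) : rcReg G s ≤ G t :=
  iInf₂_le t hst

theorem IsMartingale.isMartingale_rcReg (hG : IsFiltration m0 G) (hM : IsMartingale μ G M)
    (hcont : ∀ᵐ ω ∂μ, ∀ t, 0 ≤ t → ContinuousWithinAt (fun s => M s ω) (Ici t) t) :
    IsMartingale μ (rcReg G) M := by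
  refine isMartingale_of_setIntegral_eq
    (fun t _ => (rcReg_le_of_lt (lt_add_one t)).trans (hG.2 _)) hM.1
    (fun t ht => (hM.2.1 t ht).mono (le_rcReg hG ht) le_rfl) fun s t hs hst A hA => ?_
  obtain ⟨u, -, hu, hus⟩ := exists_seq_strictAnti_tendsto' hst
  have hu0 : ∀ n, 0 ≤ u n := fun n => hs.trans (hu n).1.le
  have hconst : ∀ n, ∫ ω in A, M (u n) ω ∂μ = ∫ ω in A, M t ω ∂μ := fun n =>
    hM.setIntegral_eq hG (hu0 n) (hu n).2.le (rcReg_le_of_lt (hu n).1 A hA)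
  have hus' : Tendsto u atTop (𝓝[≥] s) :=
    tendsto_nhdsWithin_iff.2 ⟨hus, Eventually.of_forall fun n => (hu n).1.le⟩
  have hlim := tendsto_setIntegral_of_L1' (M s) (hM.1 s hs).aestronglyMeasurable
    (Eventually.of_forall fun n => hM.1 (u n) (hu0 n))
    (hM.tendsto_eLpNorm_sub hG hs hu (hcont.mono fun ω h => (h s hs).tendsto.comp hus')) A
  simp only [hconst] at hlim
  exact tendsto_nhds_unique hlim tendsto_const_nhds

end Martingale

section Enlargement

variable {m m0 : MeasurableSpace Ω} {F : ℝ → MeasurableSpace Ω} {β : Type*} [MeasurableSpace β]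
  {Y : ℝ → Ω → β}

/-- The filtration `F` enlarged by the natural filtration of the process `Y`. -/
abbrev enlarge (F : ℝ → MeasurableSpace Ω) (Y : ℝ → Ω → β) : ℝ → MeasurableSpace Ω :=
  fun t => F t ⊔ natFilt Y t

lemma measurable_natFilt {s t : ℝ} (hs : s ∈ Icc 0 t) : Measurable[natFilt Y t] (Y s) :=
  (comap_measurable (Y s)).mono (le_iSup₂_of_le (f := fun s (_ : s ∈ Icc 0 t) =>
    MeasurableSpace.comap (Y s) inferInstance) s hs le_rfl) le_rfl

lemma isFiltration_enlarge (hF : IsFiltration m0 F) (hY : ∀ t, 0 ≤ t → Measurable (Y t)) :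
    IsFiltration m0 (enlarge F Y) :=
  ⟨fun s t hs hst => sup_le_sup (hF.1 s t hs hst) (biSup_mono fun _ hr => ⟨hr.1, hr.2.trans hst⟩),
    fun t => sup_le (hF.2 t) (iSup₂_le fun s hs => (hY s hs.1).comap_le)⟩

lemma exists_measurableSet_inter_eq_of_sup_natFilt {t : ℝ} {S : Set Ω} {b : β}
    (hY : ∀ s ∈ Icc 0 t, ∀ ω ∈ S, Y s ω = b) {A : Set Ω} (hA : MeasurableSet[m ⊔ natFilt Y t] A) :
    ∃ B, MeasurableSet[m] B ∧ A ∩ S = B ∩ S := by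
  have hle : MeasurableSpace.comap ((↑) : S → Ω) (m ⊔ natFilt Y t) ≤
      MeasurableSpace.comap (↑) m := by
    simp only [MeasurableSpace.comap_sup, natFilt, MeasurableSpace.comap_iSup,
      MeasurableSpace.comap_comp]
    refine sup_le le_rfl (iSup₂_le fun s hs => ?_)
    have hconst : Y s ∘ ((↑) : S → Ω) = fun _ => b := funext fun ω => hY s hs ω ω.2
    rw [hconst, MeasurableSpace.comap_const]
    exact bot_le
  obtain ⟨B, hB, hBA⟩ := hle _ ⟨A, hA, rfl⟩
  refine ⟨B, hB, ?_⟩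
  rw [inter_comm A, inter_comm B]
  exact (Subtype.preimage_coe_eq_preimage_coe_iff.1 hBA).symm

end Enlargement

section OneJump

variable {m : MeasurableSpace Ω} {β : Type*} [Zero β] {τ : Ω → ℝ} {X : Ω → β} {t : ℝ}

/-- The process that jumps once, at time `τ`, from `0` to `X`. -/
def oneJump (τ : Ω → ℝ) (X : Ω → β) (t : ℝ) (ω : Ω) : β :=
  if τ ω ≤ t then X ω else 0

lemma oneJump_eq_indicator : oneJump τ X t = {ω | τ ω ≤ t}.indicator X := by
  ext ω
  by_cases h : τ ω ≤ t <;> simp [oneJump, h]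

lemma continuousWithinAt_oneJump [TopologicalSpace β] (ω : Ω) :
    ContinuousWithinAt (fun s => oneJump τ X s ω) (Ici t) t := by
  rcases le_or_gt (τ ω) t with h | h
  · exact continuousWithinAt_const.congr (fun s hs => if_pos (h.trans hs)) (if_pos h)
  · refine (continuousAt_const (y := 0).congr ?_).continuousWithinAt
    filter_upwards [Iio_mem_nhds h] with s hs using (if_neg (not_le.2 hs)).symm

variable [MeasurableSpace β]

lemma measurable_oneJump (hτ : MeasurableSet[m] {ω | τ ω ≤ t}) (hX : Measurable[m] X) :
    Measurable[m] (oneJump τ X t) := by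
  rw [oneJump_eq_indicator]
  exact hX.indicator hτ

lemma measurable_oneJump_comp {γ : Type*} [Zero γ] [MeasurableSpace γ] {f : β → γ}
    (hf : Measurable f) (hτ : MeasurableSet[m] {ω | τ ω ≤ t}) (hY : Measurable[m] (oneJump τ X t)) :
    Measurable[m] (oneJump τ (fun ω => f (X ω)) t) := by
  have heq : oneJump τ (fun ω => f (X ω)) t =
      {ω | τ ω ≤ t}.indicator fun ω => f (oneJump τ X t ω) := by
    ext ω
    by_cases h : τ ω ≤ t <;> simp [oneJump, h]
  rw [heq]
  exact (hf.comp hY).indicator hτ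

variable [MeasurableSingletonClass β]

lemma measurableSet_le_of_measurable_oneJump {m0 : MeasurableSpace Ω} {μ : Measure Ω}
    (hm : ∀ s, μ s = 0 → MeasurableSet[m] s) (hX : ∀ᵐ ω ∂μ, X ω ≠ 0)
    (hY : Measurable[m] (oneJump τ X t)) : MeasurableSet[m] {ω | τ ω ≤ t} := by
  refine measurableSet_of_ae_eq hm (hY (measurableSet_singleton 0).compl) ?_
  rw [eventuallyEq_set]
  filter_upwards [hX] with ω hω
  by_cases h : τ ω ≤ t <;> simp [oneJump, h, hω]

end OneJump

/-- The Cox time: the first time at which the hazard process `Λ` reaches the threshold `E`. -/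
def coxTime (Λ : ℝ → Ω → ℝ) (E : Ω → ℝ) (ω : Ω) : ℝ :=
  firstPassage (fun t => Λ t ω) (E ω)

namespace IsHazardProcess

variable {m m0 : MeasurableSpace Ω} {μ : Measure Ω} {F : ℝ → MeasurableSpace Ω}
  {Λ : ℝ → Ω → ℝ} {E : Ω → ℝ} {t : ℝ}

lemma ae_nonneg (hΛ : IsHazardProcess μ F Λ) (ht : 0 ≤ t) : 0 ≤ᵐ[μ] Λ t :=
  hΛ.ae_isHazardPath.mono fun _ h => h.nonneg ht

lemma coxTime_le_ae_eq (hΛ : IsHazardProcess μ F Λ) (hE : ∀ᵐ ω ∂μ, 0 < E ω) (ht : 0 ≤ t) :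
    {ω | coxTime Λ E ω ≤ t} =ᵐ[μ] {ω | E ω ≤ Λ t ω} := by
  rw [eventuallyEq_set]
  filter_upwards [hΛ.ae_isHazardPath, hE] with ω hL hω using hL.firstPassage_le_iff hω ht

lemma apply_min_coxTime_ae_eq (hΛ : IsHazardProcess μ F Λ) (hE : ∀ᵐ ω ∂μ, 0 < E ω) (ht : 0 ≤ t) :
    (fun ω => Λ (min (coxTime Λ E ω) t) ω) =ᵐ[μ] fun ω => min (E ω) (Λ t ω) := by
  filter_upwards [hΛ.ae_isHazardPath, hE] with ω hL hω using hL.apply_min_firstPassage hω ht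

lemma oneJump_coxTime_ae_eq (hΛ : IsHazardProcess μ F Λ) (hE : ∀ᵐ ω ∂μ, 0 < E ω) (ht : 0 ≤ t)
    {β : Type*} [Zero β] (X : Ω → β) :
    oneJump (coxTime Λ E) X t =ᵐ[μ] {ω | E ω ≤ Λ t ω}.indicator X := by
  rw [oneJump_eq_indicator]
  exact indicator_ae_eq_of_ae_eq_set (hΛ.coxTime_le_ae_eq hE ht)

lemma measurableSet_coxTime_le (hΛ : IsHazardProcess μ F Λ) (hF : F t ≤ m0)
    (hnull : ∀ s, μ s = 0 → MeasurableSet s) (hE : Measurable E) (hE0 : ∀ᵐ ω ∂μ, 0 < E ω)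
    (ht : 0 ≤ t) : MeasurableSet {ω | coxTime Λ E ω ≤ t} :=
  measurableSet_of_ae_eq hnull (measurableSet_le hE ((hΛ.measurable t ht).mono hF le_rfl))
    (hΛ.coxTime_le_ae_eq hE0 ht).symm

lemma measurable_apply_min_coxTime (hΛ : IsHazardProcess μ F Λ) (hE : ∀ᵐ ω ∂μ, 0 < E ω)
    (hm : ∀ s, μ s = 0 → MeasurableSet[m] s) (ht : 0 ≤ t) (hF : ∀ s ∈ Icc 0 t, F s ≤ m)
    (hτ : ∀ s ∈ Icc 0 t, MeasurableSet[m] {ω | coxTime Λ E ω ≤ s}) :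
    Measurable[m] fun ω => Λ (min (coxTime Λ E ω) t) ω := by
  refine @measurable_of_Ioi _ _ _ _ _ m _ _ _ _ fun a => ?_
  let C := Icc 0 t ∩ insert t (range ((↑) : ℚ → ℝ))
  have hC : C.Countable := ((countable_range _).insert t).mono inter_subset_right
  have hmeas : MeasurableSet[m] (⋃ s ∈ C, {ω | coxTime Λ E ω ≤ s}ᶜ ∩ Λ s ⁻¹' Ioi a) :=
    .biUnion hC fun s hs => (hτ s hs.1).compl.inter
      (hF s hs.1 _ (hΛ.measurable s hs.1.1 measurableSet_Ioi))
  refine measurableSet_of_ae_eq hm hmeas (eventuallyEq_set.2 ?_)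
  filter_upwards [hΛ.ae_isHazardPath, hE, hΛ.apply_min_coxTime_ae_eq hE ht] with ω hL hω hmin
  rw [mem_preimage, mem_Ioi, hmin, hL.lt_min_iff_exists_lt_firstPassage hω ht]
  simp only [mem_iUnion, exists_prop, mem_inter_iff, mem_compl_iff, mem_ofPred_eq, not_le,
    mem_preimage, mem_Ioi, C, coxTime]

end IsHazardProcess

section CompensatedJump

/-- The process `oneJump τ X` minus the compensator `c Λ` stopped at `τ`. -/
def compensatedJump (Λ : ℝ → Ω → ℝ) (τ X : Ω → ℝ) (c t : ℝ) (ω : Ω) : ℝ :=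
  oneJump τ X t ω - c * Λ (min (τ ω) t) ω

variable {Λ : ℝ → Ω → ℝ} {τ X E : Ω → ℝ} {c s t : ℝ}

lemma compensatedJump_eq_of_le {ω : Ω} (hs : τ ω ≤ s) (hst : s ≤ t) :
    compensatedJump Λ τ X c t ω = compensatedJump Λ τ X c s ω := by
  simp only [compensatedJump, oneJump, hs, hs.trans hst, if_true, min_eq_left]

lemma continuousWithinAt_compensatedJump {ω : Ω} (hΛ : ContinuousOn (fun t => Λ t ω) (Ici 0))
    (hτ : 0 ≤ τ ω) (ht : 0 ≤ t) :
    ContinuousWithinAt (fun s => compensatedJump Λ τ X c s ω) (Ici t) t := by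
  refine (continuousWithinAt_oneJump ω).sub (continuousWithinAt_const.mul ?_)
  exact ((hΛ _ (le_min hτ ht)).comp (t := Ici 0) (by fun_prop)
    fun s hs => le_min hτ (ht.trans hs))

variable {m mX m0 : MeasurableSpace Ω} {μ : Measure Ω} {F : ℝ → MeasurableSpace Ω}

variable [IsProbabilityMeasure μ]

lemma integrable_oneJump_coxTime (hΛ : IsHazardProcess μ F Λ) (hE : IsExpOne μ E) (ht : 0 ≤ t)
    (hF : F t ≤ m0) (hX : Integrable X μ) : Integrable (oneJump (coxTime Λ E) X t) μ :=
  (hX.indicator (measurableSet_le hE.1 ((hΛ.measurable t ht).mono hF le_rfl))).congr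
    (hΛ.oneJump_coxTime_ae_eq hE.ae_pos ht X).symm

lemma integrable_apply_min_coxTime (hΛ : IsHazardProcess μ F Λ) (hE : IsExpOne μ E) (ht : 0 ≤ t)
    (hF : F t ≤ m0) : Integrable (fun ω => Λ (min (coxTime Λ E ω) t) ω) μ :=
  (hE.integrable_min ((hΛ.measurable t ht).mono hF le_rfl) (hΛ.ae_nonneg ht)).congr
    (hΛ.apply_min_coxTime_ae_eq hE.ae_pos ht).symm

lemma integrable_compensatedJump (hΛ : IsHazardProcess μ F Λ) (hE : IsExpOne μ E) (ht : 0 ≤ t)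
    (hF : F t ≤ m0) (hX : Integrable X μ) :
    Integrable (compensatedJump Λ (coxTime Λ E) X c t) μ :=
  (integrable_oneJump_coxTime hΛ hE ht hF hX).sub
    ((integrable_apply_min_coxTime hΛ hE ht hF).const_mul c)

lemma setIntegral_compensatedJump_eq_zero (hΛ : IsHazardProcess μ F Λ) (hE : IsExpOne μ E)
    (ht : 0 ≤ t) (hF : F t ≤ m) (hm : m ≤ m0)
    (hEind : Indep (MeasurableSpace.comap E inferInstance) m μ) (hmX : mX ≤ m0)
    (hXind : Indep mX (m ⊔ MeasurableSpace.comap E inferInstance) μ)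
    (hX : Measurable[mX] X) (hXint : Integrable X μ) {B : Set Ω} (hB : MeasurableSet[m] B) :
    ∫ ω in B, compensatedJump Λ (coxTime Λ E) X (∫ ω, X ω ∂μ) t ω ∂μ = 0 := by
  have hΛt : Measurable[m] (Λ t) := (hΛ.measurable t ht).mono hF le_rfl
  have hsup : m ⊔ MeasurableSpace.comap E inferInstance ≤ m0 := sup_le hm hE.1.comap_le
  have hreach : MeasurableSet[m ⊔ MeasurableSpace.comap E inferInstance] {ω | E ω ≤ Λ t ω} :=
    @measurableSet_le _ _ _ _ _ (_) _ _ _ _ _ ((comap_measurable E).mono le_sup_right le_rfl)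
      (hΛt.mono le_sup_left le_rfl)
  have hjump : ∫ ω in B, oneJump (coxTime Λ E) X t ω ∂μ =
      μ.real (B ∩ {ω | E ω ≤ Λ t ω}) * ∫ ω, X ω ∂μ := by
    rw [integral_congr_ae (ae_restrict_of_ae (hΛ.oneJump_coxTime_ae_eq hE.ae_pos ht X)),
      setIntegral_indicator (hsup _ hreach)]
    exact setIntegral_eq_smul_integral_of_indep hmX hsup hXind hX.stronglyMeasurable hXint
      (MeasurableSet.inter (le_sup_left (a := m) _ hB) hreach)
  have hcomp : ∫ ω in B, Λ (min (coxTime Λ E ω) t) ω ∂μ = μ.real (B ∩ {ω | E ω ≤ Λ t ω}) := by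
    rw [integral_congr_ae (ae_restrict_of_ae (hΛ.apply_min_coxTime_ae_eq hE.ae_pos ht))]
    exact hE.setIntegral_min_eq_measureReal hm hEind hΛt (hΛ.ae_nonneg ht) hB
  simp only [compensatedJump]
  rw [integral_sub (integrable_oneJump_coxTime hΛ hE ht (hF.trans hm) hXint).integrableOn
      ((integrable_apply_min_coxTime hΛ hE ht (hF.trans hm)).const_mul _).integrableOn,
    integral_const_mul, hjump, hcomp, mul_comm, sub_self]

end CompensatedJump

section Cox

variable {m0 : MeasurableSpace Ω} {μ : Measure Ω} {F : ℝ → MeasurableSpace Ω} {Λ : ℝ → Ω → ℝ}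
  {E : Ω → ℝ} {β : Type*} [Zero β] [MeasurableSpace β] {J : Ω → β} {h : β → ℝ} {c s t : ℝ}

lemma le_Finfty (ht : 0 ≤ t) : F t ≤ Finfty F :=
  le_iSup₂_of_le (f := fun t (_ : t ∈ Ici (0 : ℝ)) => F t) t ht le_rfl

lemma Finfty_le (hF : IsFiltration m0 F) : Finfty F ≤ m0 :=
  iSup₂_le fun t _ => hF.2 t

lemma isFiltration_enlarge_oneJump_coxTime (hF : IsFiltration m0 F)
    (hnull : ∀ s, μ s = 0 → MeasurableSet s) (hΛ : IsHazardProcess μ F Λ) (hE : Measurable E)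
    (hE0 : ∀ᵐ ω ∂μ, 0 < E ω) (hJ : Measurable J) :
    IsFiltration m0 (enlarge F (oneJump (coxTime Λ E) J)) :=
  isFiltration_enlarge hF fun t ht =>
    measurable_oneJump (hΛ.measurableSet_coxTime_le (hF.2 t) hnull hE hE0 ht) hJ

lemma measurable_compensatedJump_coxTime [MeasurableSingletonClass β] (hF : IsFiltration m0 F)
    (hnull : ∀ s, μ s = 0 → MeasurableSet[F 0] s) (hΛ : IsHazardProcess μ F Λ)
    (hE0 : ∀ᵐ ω ∂μ, 0 < E ω) (hJ0 : ∀ᵐ ω ∂μ, J ω ≠ 0) (hh : Measurable h) (ht : 0 ≤ t) :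
    Measurable[enlarge F (oneJump (coxTime Λ E) J) t]
      (compensatedJump Λ (coxTime Λ E) (fun ω => h (J ω)) c t) := by
  let G := enlarge F (oneJump (coxTime Λ E) J)
  have hnullG : ∀ s, μ s = 0 → MeasurableSet[G t] s := fun s hs =>
    le_sup_left (a := F t) _ (hF.1 0 t le_rfl ht s (hnull s hs))
  have hY : ∀ s ∈ Icc 0 t, Measurable[G t] (oneJump (coxTime Λ E) J s) := fun s hs =>
    (measurable_natFilt hs).mono le_sup_right le_rfl
  have hτ : ∀ s ∈ Icc 0 t, MeasurableSet[G t] {ω | coxTime Λ E ω ≤ s} := fun s hs =>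
    measurableSet_le_of_measurable_oneJump hnullG hJ0 (hY s hs)
  have ht' : t ∈ Icc 0 t := right_mem_Icc.2 ht
  exact (measurable_oneJump_comp hh (hτ t ht') (hY t ht')).sub
    ((hΛ.measurable_apply_min_coxTime hE0 hnullG ht
      (fun s hs => (hF.1 s t hs.1 hs.2).trans le_sup_left) hτ).const_mul c)

variable [IsProbabilityMeasure μ]

lemma setIntegral_compensatedJump_coxTime_eq (hF : IsFiltration m0 F)
    (hG : enlarge F (oneJump (coxTime Λ E) J) s ≤ m0) (hΛ : IsHazardProcess μ F Λ)
    (hE : IsExpOne μ E) (hEind : Indep (MeasurableSpace.comap E inferInstance) (Finfty F) μ)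
    (hJ : Measurable J) (hJind : Indep (MeasurableSpace.comap J inferInstance)
      (Finfty F ⊔ MeasurableSpace.comap E inferInstance) μ) (hh : Measurable h)
    (hint : Integrable (fun ω => h (J ω)) μ) (hs : 0 ≤ s) (hst : s ≤ t) {A : Set Ω}
    (hA : MeasurableSet[enlarge F (oneJump (coxTime Λ E) J) s] A) :
    ∫ ω in A, compensatedJump Λ (coxTime Λ E) (fun ω => h (J ω)) (∫ x, h (J x) ∂μ) s ω ∂μ =
      ∫ ω in A, compensatedJump Λ (coxTime Λ E) (fun ω => h (J ω)) (∫ x, h (J x) ∂μ) t ω ∂μ := by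
  let M := compensatedJump Λ (coxTime Λ E) (fun ω => h (J ω)) (∫ x, h (J x) ∂μ)
  have hM : ∀ r, 0 ≤ r → Integrable (M r) μ := fun r hr =>
    integrable_compensatedJump hΛ hE hr (hF.2 r) hint
  obtain ⟨B, hB, hAB⟩ := exists_measurableSet_inter_eq_of_sup_natFilt
    (S := {ω | s < coxTime Λ E ω}) (b := 0)
    (fun r hr ω hω => if_neg (not_le.2 (hr.2.trans_lt hω))) hA
  have hzero : ∀ r, 0 ≤ r → ∫ ω in B, M r ω ∂μ = 0 := fun r hr =>
    setIntegral_compensatedJump_eq_zero hΛ hE hr (le_Finfty hr) (Finfty_le hF) hEind hJ.comap_le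
      hJind (hh.comp (comap_measurable J)) hint (le_Finfty hs B hB)
  have hincr : ∫ ω in A, (M t ω - M s ω) ∂μ = 0 := calc
    _ = ∫ ω in B, (M t ω - M s ω) ∂μ :=
      setIntegral_eq_of_inter_eq (hG A hA) (hF.2 s B hB) hAB fun ω hω =>
        sub_eq_zero.2 (compensatedJump_eq_of_le (not_lt.1 hω) hst)
    _ = 0 := by
      rw [integral_sub (hM t (hs.trans hst)).integrableOn (hM s hs).integrableOn,
        hzero t (hs.trans hst), hzero s hs, sub_zero]
  rw [integral_sub (hM t (hs.trans hst)).integrableOn (hM s hs).integrableOn] at hincr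
  exact (sub_eq_zero.1 hincr).symm

theorem cox_one_jump_h_general [MeasurableSingletonClass β] (hF : IsFiltration m0 F)
    (hnull : ∀ s, μ s = 0 → MeasurableSet[F 0] s) (hΛ : IsHazardProcess μ F Λ)
    (hE : IsExpOne μ E) (hEind : Indep (MeasurableSpace.comap E inferInstance) (Finfty F) μ)
    (hJ : Measurable J) (hJ0 : ∀ᵐ ω ∂μ, J ω ≠ 0)
    (hJind : Indep (MeasurableSpace.comap J inferInstance)
      (Finfty F ⊔ MeasurableSpace.comap E inferInstance) μ) (hh : Measurable h)
    (hint : Integrable (fun ω => h (J ω)) μ) :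
    IsMartingale μ (rcReg (enlarge F (oneJump (coxTime Λ E) J)))
      (compensatedJump Λ (coxTime Λ E) (fun ω => h (J ω)) (∫ x, h (J x) ∂μ)) := by
  have hG : IsFiltration m0 (enlarge F (oneJump (coxTime Λ E) J)) :=
    isFiltration_enlarge_oneJump_coxTime hF (fun s hs => hF.2 0 s (hnull s hs)) hΛ hE.1 hE.ae_pos hJ
  refine IsMartingale.isMartingale_rcReg hG (isMartingale_of_setIntegral_eq (fun t _ => hG.2 t)
    (fun t ht => integrable_compensatedJump hΛ hE ht (hF.2 t) hint)
    (fun t ht => measurable_compensatedJump_coxTime hF hnull hΛ hE.ae_pos hJ0 hh ht)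
    fun s t hs hst A hA => setIntegral_compensatedJump_coxTime_eq hF (hG.2 s) hΛ hE hEind hJ hJind
      hh hint hs hst.le hA) ?_
  filter_upwards [hΛ.ae_isHazardPath] with ω hL t ht
  exact continuousWithinAt_compensatedJump hL.continuousOn (firstPassage_nonneg _ _) ht

end Cox

/-- In the Cox construction with one jump time and random jump size `J`,
for every measurable `h : ℝ → ℝ` with `h(J)` integrable, the process
`(h(J)·1_{τ ≤ t} − E[h(J)]·Λ_{τ ∧ t})_t` is a `G̃`-martingale. -/
theorem cox_one_jump_h {m0 : MeasurableSpace Ω} (μ : Measure Ω)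
    [IsProbabilityMeasure μ]
    (F : ℝ → MeasurableSpace Ω) (hUC : UsualConditions μ F)
    (lam : ℝ → Ω → ℝ) (hprog : ProgMeas F lam)
    (hnonneg : ∀ s ω, 0 ≤ lam s ω)
    (hfin : ∀ᵐ ω ∂μ, ∀ t : ℝ, IntegrableOn (fun s => lam s ω) (Set.Ioc 0 t) volume)
    (hinf : ∀ᵐ ω ∂μ, Tendsto (fun t => ∫ s in Set.Ioc 0 t, lam s ω) atTop atTop)
    (E : Ω → ℝ) (hE : IsExpOne μ E)
    (hEindep : Indep (MeasurableSpace.comap E inferInstance) (Finfty F) μ)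
    (τ : Ω → ℝ)
    (hτ : ∀ ω, τ ω = sInf {t : ℝ | 0 < t ∧ E ω ≤ ∫ s in Set.Ioc 0 t, lam s ω})
    (J : Ω → ℝ) (hJmeas : Measurable J) (hJint : Integrable J μ)
    (hJnonvanish : μ {ω | J ω ≠ 0} = 1)
    (hJindep : Indep (MeasurableSpace.comap J inferInstance)
      (Finfty F ⊔ MeasurableSpace.comap E inferInstance) μ)
    (Gtil : ℝ → MeasurableSpace Ω)
    (hGtil : ∀ t : ℝ, Gtil t =
      rcReg (fun u => F u ⊔ natFilt (fun s ω => if τ ω ≤ s then J ω else 0) u) t)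
    (h : ℝ → ℝ) (hh : Measurable h) (hhJ : Integrable (fun ω => h (J ω)) μ) :
    IsMartingale μ Gtil (fun t ω =>
      (if τ ω ≤ t then h (J ω) else 0) -
        (∫ x, h (J x) ∂μ) * ∫ s in Set.Ioc 0 (min (τ ω) t), lam s ω) := by
  obtain rfl : τ = coxTime (fun t ω => ∫ s in Ioc 0 t, lam s ω) E := funext hτ
  obtain rfl : Gtil = _ := funext hGtil
  have hΛ := hprog.isHazardProcess_setIntegral hnonneg hfin hinf
  have hJ0 : ∀ᵐ ω ∂μ, J ω ≠ 0 :=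
    (prob_compl_eq_zero_iff (hJmeas (measurableSet_singleton 0).compl)).2 hJnonvanish
  exact cox_one_jump_h_general hUC.1 hUC.2.2 hΛ hE hEindep hJmeas hJ0 hJindep hh hhJ

end InvMarkovJump
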